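/- For every δ > 0 there is N ∈ ℕ such that the following holds. Let G be a finite abelian group of order n ≥ N, let p be a real with n^{−1/700} ≤ p ≤ 1, and let R be a p-random subset of G. Then with probability at least 1 − δ the following event holds: for every k ≥ 1, every set S ⊆ G × ℤ^k of at most 100 words each of which is linear in at least one variable, and every U ⊆ G with |U| ≤ p^{100}·n/1000, there exists a function f : {1,…,k} → G such that f separates S, π_f(S) ∩ U = ∅, and π_f(S) ⊆ R. -/

import Mathlib

open scoped Classical

/-- The probability that a `p`-random subset of the finite type `G` (each element included
independently with probability `p`) equals the finset `A`. -/
noncomputable def setProb (G : Type) [Fintype G] [DecidableEq G] (p : ℝ) (A : Finset G) : ℝ :=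
  p ^ A.card * (1 - p) ^ (Fintype.card G - A.card)

/-- The projection of the word `w = (g, z) ∈ G × ℤᵏ` under `f : Fin k → G`, namely
`g + ∑ i, z i • f i`. -/
def proj {G : Type} [AddCommGroup G] {k : ℕ} (f : Fin k → G) (w : G × (Fin k → ℤ)) : G :=
  w.1 + ∑ i, w.2 i • f i

/-- Two words `w, w'` with difference `(g, z)` are separable if (a) `z i ∈ {1,-1}` for
some `i`, or (b) `z = 0` and `g ≠ 0`, or (c) `z = 3eᵢ - 2eⱼ` or `z = 2eⱼ - 3eᵢ` for some
`i ≠ j`. -/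
def Separable {G : Type} [AddCommGroup G] {k : ℕ} (w w' : G × (Fin k → ℤ)) : Prop :=
  (∃ i, (w - w').2 i = 1 ∨ (w - w').2 i = -1) ∨
  ((w - w').2 = 0 ∧ (w - w').1 ≠ 0) ∨
  (∃ i j, i ≠ j ∧
    ((w - w').2 = Pi.single i (3 : ℤ) - Pi.single j (2 : ℤ) ∨
     (w - w').2 = Pi.single j (2 : ℤ) - Pi.single i (3 : ℤ)))

/-- `f` separates `S` if the projections under `f` of every separable pair of distinct
words of `S` are distinct. -/
def SeparatesSet {G : Type} [AddCommGroup G] {k : ℕ} (f : Fin k → G)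
    (S : Finset (G × (Fin k → ℤ))) : Prop :=
  ∀ w ∈ S, ∀ w' ∈ S, w ≠ w' → Separable w w' → proj f w ≠ proj f w'

/-- The mean of `F` over a `p`-random subset of `s`. -/
noncomputable def subsetMean {α : Type*} (p : ℝ) (s : Finset α) (F : Finset α → ℝ) : ℝ :=
  ∑ A ∈ s.powerset, p ^ A.card * (1 - p) ^ (s.card - A.card) * F A

section SubsetMean

variable {α : Type*} {p : ℝ} {s : Finset α} {F F' : Finset α → ℝ}

lemma subsetMean_insert [DecidableEq α] {a : α} (ha : a ∉ s) :
    subsetMean p (insert a s) F =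
      subsetMean p s (fun A => p * F (insert a A) + (1 - p) * F A) := by
  unfold subsetMean
  rw [Finset.sum_powerset_insert ha, ← Finset.sum_add_distrib]
  refine Finset.sum_congr rfl fun A hA => ?_
  have hA' := Finset.mem_powerset.1 hA
  have haA : a ∉ A := fun h => ha (hA' h)
  have hc := Finset.card_le_card hA'
  rw [Finset.card_insert_of_notMem ha, Finset.card_insert_of_notMem haA,
    show s.card + 1 - A.card = (s.card - A.card) + 1 by omega, Nat.add_sub_add_right]
  ring

lemma subsetMean_mono (hp0 : 0 ≤ p) (hp1 : p ≤ 1) (h : ∀ A, F A ≤ F' A) :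
    subsetMean p s F ≤ subsetMean p s F' :=
  Finset.sum_le_sum fun A _ => mul_le_mul_of_nonneg_left (h A)
    (mul_nonneg (pow_nonneg hp0 _) (pow_nonneg (sub_nonneg.2 hp1) _))

lemma subsetMean_mul_const (c : ℝ) :
    subsetMean p s (fun A => F A * c) = subsetMean p s F * c := by
  simp only [subsetMean, Finset.sum_mul, mul_assoc]

lemma subsetMean_sum {ι : Type*} (t : Finset ι) (f : ι → Finset α → ℝ) :
    subsetMean p s (fun A => ∑ i ∈ t, f i A) = ∑ i ∈ t, subsetMean p s (f i) := by
  simp only [subsetMean, Finset.mul_sum]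
  exact Finset.sum_comm

lemma subsetMean_sub :
    subsetMean p s (fun A => F A - F' A) = subsetMean p s F - subsetMean p s F' := by
  simp only [subsetMean, mul_sub, Finset.sum_sub_distrib]

lemma subsetMean_subset_indicator [Fintype α] [DecidableEq α] (B : Finset α) :
    subsetMean p Finset.univ (fun A => if B ⊆ A then 1 else 0) = p ^ B.card := by
  have h := Finset.prod_add (fun _ : α => p) (fun i => if i ∈ B then 0 else 1 - p) Finset.univ
  have h1 : ∏ i : α, (p + if i ∈ B then 0 else 1 - p) = p ^ B.card := by
    rw [← Finset.prod_const, ← Finset.prod_subset (Finset.subset_univ B)]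
    · exact Finset.prod_congr rfl fun i hi => by simp [hi]
    · intro i _ hi
      simp [hi]
  rw [← h1, h, subsetMean]
  refine Finset.sum_congr rfl fun A _ => ?_
  rw [mul_assoc, Finset.prod_const]
  congr 1
  split_ifs with hBA
  · rw [mul_one, ← Finset.card_sdiff_of_subset (Finset.subset_univ A), ← Finset.prod_const]
    refine Finset.prod_congr rfl fun i hi => ?_
    rw [if_neg fun hB => (Finset.mem_sdiff.1 hi).2 (hBA hB)]
  · obtain ⟨b, hb, hbA⟩ := Finset.not_subset.1 hBA
    rw [mul_zero, Finset.prod_eq_zero (i := b) (by simp [hbA]) (by simp [hb])]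

lemma subsetMean_const [Fintype α] (c : ℝ) :
    subsetMean p (Finset.univ : Finset α) (fun _ => c) = c := by
  classical
  have h := subsetMean_subset_indicator (p := p) (∅ : Finset α)
  have h' := subsetMean_mul_const (p := p) (s := (Finset.univ : Finset α)) (F := fun _ => 1) c
  simp only [Finset.empty_subset, if_true, Finset.card_empty, pow_zero] at h
  simpa [h] using h'

lemma two_point_exp_le {x y c : ℝ} (hp0 : 0 ≤ p) (hp1 : p ≤ 1) (hc : c ≤ 1)
    (hxy : |x - y| ≤ c) :
    p * Real.exp ((p * x + (1 - p) * y) - x) + (1 - p) * Real.exp ((p * x + (1 - p) * y) - y)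
      ≤ Real.exp (c ^ 2) := by
  have key : ∀ u : ℝ, |u| ≤ c → Real.exp u ≤ 1 + u + c ^ 2 := by
    intro u hu
    have h := (abs_le.1 (Real.abs_exp_sub_one_sub_id_le (hu.trans hc))).2
    have h2 : u ^ 2 ≤ c ^ 2 := by
      rw [← sq_abs u]
      exact pow_le_pow_left₀ (abs_nonneg u) hu 2
    linarith
  have hq : 0 ≤ 1 - p := sub_nonneg.2 hp1
  have h1 := key ((p * x + (1 - p) * y) - x) (by
    rw [show (p * x + (1 - p) * y) - x = -((1 - p) * (x - y)) by ring, abs_neg, abs_mul,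
      abs_of_nonneg hq]
    nlinarith [abs_nonneg (x - y)])
  have h2 := key ((p * x + (1 - p) * y) - y) (by
    rw [show (p * x + (1 - p) * y) - y = p * (x - y) by ring, abs_mul, abs_of_nonneg hp0]
    nlinarith [abs_nonneg (x - y)])
  have h3 := Real.add_one_le_exp (c ^ 2)
  have h4 := mul_le_mul_of_nonneg_left h1 hp0
  have h5 := mul_le_mul_of_nonneg_left h2 hq
  nlinarith

lemma subsetMean_exp_sub_le [DecidableEq α] {c : ℝ} (hp0 : 0 ≤ p) (hp1 : p ≤ 1) (hc : c ≤ 1)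
    (hF : ∀ a A, |F (insert a A) - F A| ≤ c) :
    subsetMean p s (fun A => Real.exp (subsetMean p s F - F A)) ≤ Real.exp (s.card * c ^ 2) := by
  induction s using Finset.induction_on generalizing F with
  | empty => simp [subsetMean]
  | insert a s ha ih =>
    set Y : Finset α → ℝ := fun A => p * F (insert a A) + (1 - p) * F A with hY
    have hE : subsetMean p (insert a s) F = subsetMean p s Y := subsetMean_insert ha
    have hq : 0 ≤ 1 - p := sub_nonneg.2 hp1
    have hYF : ∀ b A, |Y (insert b A) - Y A| ≤ c := by
      intro b A
      have h1 := abs_le.1 (hF b (insert a A))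
      have h2 := abs_le.1 (hF b A)
      rw [Finset.insert_comm] at h1
      rw [abs_le]
      simp only [hY]
      constructor <;> nlinarith [h1.1, h1.2, h2.1, h2.2]
    rw [hE, subsetMean_insert ha, Finset.card_insert_of_notMem ha]
    calc _ ≤ subsetMean p s
          (fun A => Real.exp (subsetMean p s Y - Y A) * Real.exp (c ^ 2)) := by
          refine subsetMean_mono hp0 hp1 fun A => ?_
          have h := two_point_exp_le hp0 hp1 hc (hF a A)
          have h' := mul_le_mul_of_nonneg_left h (Real.exp_pos (subsetMean p s Y - Y A)).le
          refine le_trans (le_of_eq ?_) h'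
          rw [show subsetMean p s Y - F (insert a A) =
              (subsetMean p s Y - Y A) + (Y A - F (insert a A)) by ring,
            show subsetMean p s Y - F A = (subsetMean p s Y - Y A) + (Y A - F A) by ring,
            Real.exp_add, Real.exp_add]
          simp only [hY]
          ring
      _ = subsetMean p s (fun A => Real.exp (subsetMean p s Y - Y A)) * Real.exp (c ^ 2) :=
          subsetMean_mul_const _
      _ ≤ Real.exp (s.card * c ^ 2) * Real.exp (c ^ 2) :=
          mul_le_mul_of_nonneg_right (ih hYF) (Real.exp_pos _).le
      _ = _ := by
          rw [← Real.exp_add]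
          push_cast
          ring_nf

/-- A lower-tail bounded differences inequality for functions of a random subset. -/
lemma subsetMean_lower_tail_le [DecidableEq α] {c t : ℝ} (hp0 : 0 ≤ p) (hp1 : p ≤ 1)
    (hc : 0 < c) (hs : 0 < s.card) (ht : 0 ≤ t) (htc : t ≤ 2 * s.card * c)
    (hF : ∀ a A, |F (insert a A) - F A| ≤ c) :
    subsetMean p s (fun A => if F A ≤ subsetMean p s F - t then 1 else 0) ≤
      Real.exp (-(t ^ 2 / (4 * s.card * c ^ 2))) := by
  have hs' : (0 : ℝ) < s.card := by exact_mod_cast hs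
  set l : ℝ := t / (2 * s.card * c ^ 2) with hl
  have hl0 : 0 ≤ l := by positivity
  have hlc : c * l ≤ 1 := by
    rw [hl, mul_div_assoc', div_le_one (by positivity)]
    nlinarith
  have hm : subsetMean p s (fun A => F A * l) = subsetMean p s F * l := subsetMean_mul_const l
  have hexp := subsetMean_exp_sub_le (p := p) (s := s) (F := fun A => F A * l) hp0 hp1 hlc (by
    intro a A
    rw [← sub_mul, abs_mul, abs_of_nonneg hl0]
    exact mul_le_mul_of_nonneg_right (hF a A) hl0)
  rw [hm] at hexp
  calc _ ≤ subsetMean p s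
        (fun A => Real.exp (subsetMean p s F * l - F A * l) * Real.exp (-(t * l))) := by
        refine subsetMean_mono hp0 hp1 fun A => ?_
        rw [← Real.exp_add]
        split_ifs with h
        · rw [← Real.exp_zero]
          apply Real.exp_le_exp.2
          nlinarith
        · positivity
    _ ≤ Real.exp (s.card * (c * l) ^ 2) * Real.exp (-(t * l)) := by
        rw [subsetMean_mul_const]
        exact mul_le_mul_of_nonneg_right hexp (Real.exp_pos _).le
    _ = _ := by
        rw [← Real.exp_add, hl]
        congr 1
        field_simp
        ring

end SubsetMean

lemma card_filter_subset_sub_le {H α : Type*} [Fintype H] [Fintype α] [DecidableEq α] {m : ℕ}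
    (L : Fin m → H → α) (b : ℝ)
    (hL : ∀ j x, ((Finset.univ.filter fun h => L j h = x).card : ℝ) ≤ b) (a : α) (A : Finset α) :
    |((Finset.univ.filter fun h => ∀ j, L j h ∈ insert a A).card : ℝ) -
      (Finset.univ.filter fun h => ∀ j, L j h ∈ A).card| ≤ m * b := by
  have hsub : (Finset.univ.filter fun h => ∀ j, L j h ∈ A) ⊆
      Finset.univ.filter fun h => ∀ j, L j h ∈ insert a A := by
    intro h
    simp only [Finset.mem_filter, Finset.mem_univ, true_and]
    exact fun hh j => Finset.mem_insert_of_mem (hh j)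
  have hsub' : (Finset.univ.filter fun h => ∀ j, L j h ∈ insert a A) ⊆
      (Finset.univ.filter fun h => ∀ j, L j h ∈ A) ∪
        Finset.univ.biUnion fun j => Finset.univ.filter fun h => L j h = a := by
    intro h
    simp only [Finset.mem_filter, Finset.mem_univ, true_and, Finset.mem_union,
      Finset.mem_biUnion]
    intro hh
    by_contra! hcon
    obtain ⟨⟨j, hj⟩, h2⟩ := hcon
    exact (Finset.mem_insert.1 (hh j)).elim (h2 j) hj
  have h1 : ((Finset.univ.filter fun h => ∀ j, L j h ∈ A).card : ℝ) ≤
      (Finset.univ.filter fun h => ∀ j, L j h ∈ insert a A).card := by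
    exact_mod_cast Finset.card_le_card hsub
  have h2 : ((Finset.univ.filter fun h => ∀ j, L j h ∈ insert a A).card : ℝ) ≤
      (Finset.univ.filter fun h => ∀ j, L j h ∈ A).card +
        ∑ j, ((Finset.univ.filter fun h => L j h = a).card : ℝ) := by
    exact_mod_cast (Finset.card_le_card hsub').trans
      ((Finset.card_union_le _ _).trans (Nat.add_le_add_left Finset.card_biUnion_le _))
  have h3 : ∑ j, ((Finset.univ.filter fun h => L j h = a).card : ℝ) ≤ m * b := by
    refine (Finset.sum_le_sum fun j _ => hL j a).trans (le_of_eq ?_)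
    simp
  rw [abs_of_nonneg (sub_nonneg.2 h1)]
  linarith

section Concentration

variable {H α : Type*} [Fintype H] [Nonempty H] [Fintype α] [Nonempty α] {m : ℕ} {p : ℝ}

/-- For maps `L j : H → α` with small fibres, it is very unlikely that few `h` have all the
`L j h` in a random subset of `α`. -/
lemma subsetMean_few_le (L : Fin m → H → α) (hm : 1 ≤ m)
    (hL : ∀ j x, (Finset.univ.filter fun h => L j h = x).card * Fintype.card α ≤ Fintype.card H)
    (hp0 : 0 ≤ p) (hp1 : p ≤ 1) :
    subsetMean p Finset.univ (fun R : Finset α =>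
      if ((Finset.univ.filter fun h => ∀ j, L j h ∈ R).card : ℝ) ≤ p ^ m / 2 * Fintype.card H
      then 1 else 0) ≤
      Real.exp (-(p ^ (2 * m) * Fintype.card α / (16 * m ^ 2))) := by
  have hH : (0 : ℝ) < Fintype.card H := by exact_mod_cast Fintype.card_pos
  have hα : (0 : ℝ) < Fintype.card α := by exact_mod_cast Fintype.card_pos
  have hm' : (1 : ℝ) ≤ m := by exact_mod_cast hm
  have hpm : p ^ m ≤ 1 := pow_le_one₀ hp0 hp1
  have hpm0 : 0 ≤ p ^ m := pow_nonneg hp0 m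
  set X : Finset α → ℝ :=
    fun R => ((Finset.univ.filter fun h => ∀ j, L j h ∈ R).card : ℝ) * (Fintype.card H : ℝ)⁻¹
    with hX
  have hdiff : ∀ a A, |X (insert a A) - X A| ≤ m / Fintype.card α := by
    intro a A
    have h := card_filter_subset_sub_le L ((Fintype.card H : ℝ) / Fintype.card α) (by
      intro j x
      rw [le_div_iff₀ hα]
      exact_mod_cast hL j x) a A
    simp only [hX]
    rw [← sub_mul, abs_mul, abs_of_pos (inv_pos.2 hH), ← div_eq_mul_inv, div_le_iff₀ hH]
    refine h.trans (le_of_eq ?_)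
    ring
  have hmean : p ^ m ≤ subsetMean p Finset.univ X := by
    rw [hX, subsetMean_mul_const, ← div_eq_mul_inv, le_div_iff₀ hH]
    have hcard : ∀ R : Finset α, ((Finset.univ.filter fun h => ∀ j, L j h ∈ R).card : ℝ) =
        ∑ h : H, if Finset.univ.image (fun j => L j h) ⊆ R then 1 else 0 := by
      intro R
      rw [Finset.card_filter]
      push_cast
      refine Finset.sum_congr rfl fun h _ => if_congr ?_ rfl rfl
      simp [Finset.subset_iff]
    simp only [hcard]
    rw [subsetMean_sum]
    calc p ^ m * Fintype.card H = ∑ _h : H, p ^ m := by simp [mul_comm]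
      _ ≤ _ := by
        refine Finset.sum_le_sum fun h _ => ?_
        rw [subsetMean_subset_indicator]
        exact pow_le_pow_of_le_one hp0 hp1 (Finset.card_image_le.trans (by simp))
  have htail := subsetMean_lower_tail_le (p := p) (s := (Finset.univ : Finset α)) (F := X)
    (c := m / Fintype.card α) (t := p ^ m / 2) hp0 hp1 (by positivity)
    (by rw [Finset.card_univ]; exact Fintype.card_pos) (by positivity)
    (by
      rw [Finset.card_univ, mul_assoc, mul_div_cancel₀ _ hα.ne']
      linarith) hdiff
  refine (subsetMean_mono hp0 hp1 fun R => ?_).trans (htail.trans (le_of_eq ?_))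
  · split_ifs with h1 h2
    · exact le_rfl
    · refine absurd ?_ h2
      have : X R ≤ p ^ m / 2 := by
        simp only [hX]
        rwa [← div_eq_mul_inv, div_le_iff₀ hH]
      linarith
    · exact zero_le_one
    · exact le_rfl
  · rw [Finset.card_univ]
    congr 1
    field_simp
    ring

lemma subsetMean_forall_many_ge {T : Type*} [Fintype T] (L : T → Fin m → H → α) (hm : 1 ≤ m)
    (hL : ∀ t j x,
      (Finset.univ.filter fun h => L t j h = x).card * Fintype.card α ≤ Fintype.card H)
    (hp0 : 0 ≤ p) (hp1 : p ≤ 1) :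
    1 - Fintype.card T * Real.exp (-(p ^ (2 * m) * Fintype.card α / (16 * m ^ 2))) ≤
    subsetMean p Finset.univ (fun R : Finset α =>
      if ∀ t, p ^ m / 2 * Fintype.card H < ((Finset.univ.filter fun h => ∀ j, L t j h ∈ R).card : ℝ)
      then 1 else 0) := by
  have h1 : subsetMean p Finset.univ (fun R : Finset α => 1 - ∑ t : T,
      if ((Finset.univ.filter fun h => ∀ j, L t j h ∈ R).card : ℝ) ≤ p ^ m / 2 * Fintype.card H
      then (1 : ℝ) else 0) ≤ subsetMean p Finset.univ (fun R : Finset α =>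
      if ∀ t, p ^ m / 2 * Fintype.card H < ((Finset.univ.filter fun h => ∀ j, L t j h ∈ R).card : ℝ)
      then 1 else 0) := by
    refine subsetMean_mono hp0 hp1 fun R => ?_
    split_ifs with h
    · exact sub_le_self _ (Finset.sum_nonneg fun t _ => by split_ifs <;> simp)
    · push Not at h
      obtain ⟨t, ht⟩ := h
      have := Finset.single_le_sum (f := fun t => if ((Finset.univ.filter fun h =>
        ∀ j, L t j h ∈ R).card : ℝ) ≤ p ^ m / 2 * Fintype.card H then (1 : ℝ) else 0)
        (fun t _ => by split_ifs <;> simp) (Finset.mem_univ t)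
      simp only [if_pos ht] at this
      linarith
  refine le_trans ?_ h1
  rw [subsetMean_sub, subsetMean_const, subsetMean_sum]
  refine sub_le_sub_left ?_ _
  refine (Finset.sum_le_sum fun t _ => subsetMean_few_le (L t) hm (hL t) hp0 hp1).trans ?_
  simp

end Concentration

lemma card_lt_of_forall_translate {F H : Type*} [AddGroup F] [Fintype F] [Fintype H] [Nonempty H]
    (φ : H → F) (P : F → Prop) [DecidablePred P] (a : ℝ)
    (h : ∀ f, a * Fintype.card H < ((Finset.univ.filter fun h => P (f + φ h)).card : ℝ)) :
    a * Fintype.card F < ((Finset.univ.filter P).card : ℝ) := by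
  have hH : (0 : ℝ) < Fintype.card H := by exact_mod_cast Fintype.card_pos
  have h1 : ∑ f : F, ((Finset.univ.filter fun h => P (f + φ h)).card : ℝ) =
      Fintype.card H * (Finset.univ.filter P).card := by
    simp only [Finset.card_filter]
    push_cast
    rw [Finset.sum_comm]
    have : ∀ h : H, ∑ f : F, (if P (f + φ h) then (1 : ℝ) else 0) =
        ∑ f : F, if P f then (1 : ℝ) else 0 := fun h =>
      Equiv.sum_comp (Equiv.addRight (φ h)) fun f => if P f then (1 : ℝ) else 0
    simp [this]
  have h2 : ∑ _f : F, a * (Fintype.card H : ℝ) <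
      ∑ f : F, ((Finset.univ.filter fun h => P (f + φ h)).card : ℝ) :=
    Finset.sum_lt_sum_of_nonempty Finset.univ_nonempty fun f _ => h f
  rw [h1] at h2
  simp only [Finset.sum_const, Finset.card_univ, nsmul_eq_mul] at h2
  nlinarith

/-- Words in `m` variables with coefficients reduced modulo the order of `G`. -/
abbrev ReducedWord (G : Type) [Fintype G] (m : ℕ) : Type :=
  G × (Fin m → Fin (Fintype.card G))

lemma card_pi_reducedWord (G : Type) [Fintype G] (m : ℕ) :
    Fintype.card (Fin m → ReducedWord G m) = Fintype.card G ^ ((m + 1) * m) := by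
  simp [ReducedWord, pow_mul, pow_succ']

section Words

variable {G : Type} [AddCommGroup G] {k : ℕ}

lemma proj_sub_proj (f : Fin k → G) (w w' : G × (Fin k → ℤ)) :
    proj f w - proj f w' = proj f (w - w') := by
  simp only [proj, Prod.fst_sub, Prod.snd_sub, Pi.sub_apply, sub_smul, Finset.sum_sub_distrib]
  abel

lemma proj_add_sum_single {m : ℕ} (f : Fin k → G) (c : Fin m → Fin k) (h : Fin m → G)
    (w : G × (Fin k → ℤ)) :
    proj (f + ∑ l, Pi.single (c l) (h l)) w = proj h (proj f w, fun l => w.2 (c l)) := by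
  simp only [proj, Pi.add_apply, smul_add, Finset.sum_add_distrib, Finset.sum_apply,
    Finset.smul_sum, add_assoc]
  congr 2
  rw [Finset.sum_comm]
  refine Finset.sum_congr rfl fun l _ => ?_
  rw [Finset.sum_eq_single (c l)]
  · simp
  · intro b _ hb
    simp [Pi.single_eq_of_ne hb]
  · simp

lemma exists_sum_zsmul_eq_of_unit {z : Fin k → ℤ} {i : Fin k} (hi : z i = 1 ∨ z i = -1) (x : G) :
    ∃ f : Fin k → G, ∑ i, z i • f i = x := by
  refine ⟨Pi.single i (z i • x), ?_⟩
  rw [Finset.sum_eq_single i]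
  · rw [Pi.single_eq_same, smul_smul]
    rcases hi with h | h <;> simp [h]
  · intro b _ hb
    simp [Pi.single_eq_of_ne hb]
  · simp

lemma sum_single_sub_single_smul {i j : Fin k} (hij : i ≠ j) (a b : ℤ) (x : G) :
    ∑ l, (Pi.single i a - Pi.single j b : Fin k → ℤ) l •
      (Pi.single i x + Pi.single j x : Fin k → G) l = (a - b) • x := by
  rw [Finset.sum_eq_add_of_mem i j (Finset.mem_univ _) (Finset.mem_univ _) hij]
  · simp [hij, hij.symm, sub_eq_add_neg, add_smul]
  · intro c _ hc
    simp [hc.1, hc.2]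

variable [Fintype G]

lemma proj_emod_card (f : Fin k → G) (g : G) (z : Fin k → ℤ) :
    proj f (g, fun i => z i % Fintype.card G) = proj f (g, z) := by
  simp [proj, mod_card_zsmul]

lemma card_proj_eq_mul_card {z : Fin k → ℤ}
    (hz : ∀ x : G, ∃ f : Fin k → G, ∑ i, z i • f i = x) (g x : G) :
    (Finset.univ.filter fun f : Fin k → G => proj f (g, z) = x).card * Fintype.card G =
      Fintype.card (Fin k → G) := by
  let φ : (Fin k → G) →+ G := AddMonoidHom.mk' (fun f => ∑ i, z i • f i) fun a b => by
    simp [Finset.sum_add_distrib]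
  have hφ : ∀ y, y ∈ Set.range φ := hz
  have h := Finset.card_eq_sum_card_fiberwise (f := φ) (s := Finset.univ) (t := Finset.univ)
    fun _ _ => Finset.mem_coe.2 (Finset.mem_univ _)
  rw [Finset.sum_congr rfl fun y _ =>
    AddMonoidHom.card_fiber_eq_of_mem_range φ (hφ y) (hφ (x - g))] at h
  simp only [Finset.sum_const, Finset.card_univ, smul_eq_mul] at h
  rw [h, mul_comm]
  congr 3
  ext f
  simp only [proj, φ, AddMonoidHom.mk'_apply]
  rw [eq_sub_iff_add_eq, add_comm]

lemma card_proj_eq_proj_le {w w' : G × (Fin k → ℤ)} (h : Separable w w') :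
    (Finset.univ.filter fun f : Fin k → G => proj f w = proj f w').card * Fintype.card G ≤
      Fintype.card (Fin k → G) := by
  have key : (∀ x : G, ∃ f : Fin k → G, ∑ i, (w - w').2 i • f i = x) →
      (Finset.univ.filter fun f : Fin k → G => proj f w = proj f w').card * Fintype.card G ≤
        Fintype.card (Fin k → G) := by
    intro hz
    rw [← card_proj_eq_mul_card hz (w - w').1 0]
    refine le_of_eq ?_
    congr 3
    ext f
    rw [← sub_eq_zero, proj_sub_proj]
  rcases h with ⟨i, hi⟩ | ⟨hz, hg⟩ | ⟨i, j, hij, h | h⟩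
  · exact key (exists_sum_zsmul_eq_of_unit hi)
  · rw [Finset.filter_false_of_mem]
    · simp
    · intro f _ hf
      rw [← sub_eq_zero, proj_sub_proj] at hf
      simp only [proj, hz] at hf
      exact hg (by simpa using hf)
  · refine key fun x => ⟨Pi.single i x + Pi.single j x, ?_⟩
    rw [h]
    exact (sum_single_sub_single_smul hij 3 2 x).trans (by simp)
  · refine key fun x => ⟨Pi.single j (-x) + Pi.single i (-x), ?_⟩
    rw [h]
    exact (sum_single_sub_single_smul hij.symm 2 3 (-x)).trans (by simp)

/-- Few `f` fail to separate `S` or project a word of `S` into `U`. -/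
lemma card_bad_mul_card_le {m : ℕ} (S : Finset (G × (Fin k → ℤ))) (hS : S.card ≤ m)
    (hlin : ∀ w ∈ S, ∃ i, w.2 i = 1 ∨ w.2 i = -1) (U : Finset G) :
    (Finset.univ.filter fun f : Fin k → G =>
      ¬ (SeparatesSet f S ∧ ∀ w ∈ S, proj f w ∉ U)).card * Fintype.card G ≤
      (m ^ 2 + m * U.card) * Fintype.card (Fin k → G) := by
  have hsub : (Finset.univ.filter fun f : Fin k → G =>
      ¬ (SeparatesSet f S ∧ ∀ w ∈ S, proj f w ∉ U)) ⊆
      (((S ×ˢ S).filter fun q => Separable q.1 q.2).biUnion fun q =>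
        Finset.univ.filter fun f : Fin k → G => proj f q.1 = proj f q.2) ∪
      (S ×ˢ U).biUnion fun q => Finset.univ.filter fun f : Fin k → G => proj f q.1 = q.2 := by
    intro f
    simp only [Finset.mem_filter, Finset.mem_univ, true_and, Finset.mem_union,
      Finset.mem_biUnion, Finset.mem_product]
    intro hf
    rw [SeparatesSet, not_and_or] at hf
    push Not at hf
    rcases hf with ⟨w, hw, w', hw', _, hs, he⟩ | ⟨w, hw, hU⟩
    · exact Or.inl ⟨(w, w'), ⟨⟨hw, hw'⟩, hs⟩, he⟩
    · exact Or.inr ⟨(w, _), ⟨hw, hU⟩, rfl⟩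
  refine (Nat.mul_le_mul_right _ ((Finset.card_le_card hsub).trans
    ((Finset.card_union_le _ _).trans
      (Nat.add_le_add Finset.card_biUnion_le Finset.card_biUnion_le)))).trans ?_
  rw [add_mul, add_mul, Finset.sum_mul, Finset.sum_mul]
  refine Nat.add_le_add ?_ ?_
  · refine (Finset.sum_le_card_nsmul _ _ (Fintype.card (Fin k → G)) fun q hq =>
      card_proj_eq_proj_le (Finset.mem_filter.1 hq).2).trans ?_
    rw [smul_eq_mul]
    refine Nat.mul_le_mul_right _ ((Finset.card_filter_le _ _).trans ?_)
    rw [Finset.card_product, sq]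
    exact Nat.mul_le_mul hS hS
  · refine (Finset.sum_le_card_nsmul _ _ (Fintype.card (Fin k → G)) fun q hq => ?_).trans ?_
    · obtain ⟨i, hi⟩ := hlin q.1 (Finset.mem_product.1 hq).1
      exact (card_proj_eq_mul_card (exists_sum_zsmul_eq_of_unit hi) q.1.1 q.2).le
    · rw [smul_eq_mul, Finset.card_product]
      exact Nat.mul_le_mul_right _ (Nat.mul_le_mul_right _ hS)

/-- The word with integer coefficients represented by a reduced word. -/
def ReducedWord.toWord {m : ℕ} (t : ReducedWord G m) : G × (Fin m → ℤ) :=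
  (t.1, fun l => ((t.2 l : ℕ) : ℤ))

/-- Every fibre of the projection of a word has proportion at most `1 / |G|`. -/
def SmallFibers {m : ℕ} (w : G × (Fin m → ℤ)) : Prop :=
  ∀ x : G, (Finset.univ.filter fun h : Fin m → G => proj h w = x).card * Fintype.card G ≤
    Fintype.card (Fin m → G)

lemma exists_reducedWord {m : ℕ} (w : G × (Fin m → ℤ)) :
    ∃ t : ReducedWord G m, ∀ h : Fin m → G, proj h t.toWord = proj h w := by
  have hn : (0 : ℤ) < Fintype.card G := by exact_mod_cast Fintype.card_pos
  have h0 : ∀ l, 0 ≤ w.2 l % Fintype.card G := fun l => Int.emod_nonneg _ hn.ne'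
  have h1 : ∀ l, w.2 l % Fintype.card G < Fintype.card G := fun l => Int.emod_lt_of_pos _ hn
  refine ⟨(w.1, fun l => ⟨(w.2 l % Fintype.card G).toNat, by have := h0 l; have := h1 l; omega⟩),
    fun h => ?_⟩
  rw [← proj_emod_card h w.1 w.2]
  congr 1
  refine Prod.ext rfl (funext fun l => ?_)
  exact Int.toNat_of_nonneg (h0 l)

lemma card_forall_proj_mem_gt {m : ℕ} {a : ℝ} {R : Finset G}
    (hR : ∀ t : Fin m → ReducedWord G m, (∀ j, SmallFibers (t j).toWord) →
      a * Fintype.card (Fin m → G) <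
        ((Finset.univ.filter fun h : Fin m → G => ∀ j, proj h (t j).toWord ∈ R).card : ℝ))
    (w : Fin m → G × (Fin k → ℤ)) (hw : ∀ j, ∃ i, (w j).2 i = 1 ∨ (w j).2 i = -1) :
    a * Fintype.card (Fin k → G) <
      ((Finset.univ.filter fun f : Fin k → G => ∀ j, proj f (w j) ∈ R).card : ℝ) := by
  choose c hc using hw
  refine card_lt_of_forall_translate (H := Fin m → G) (fun h => ∑ l, Pi.single (c l) (h l))
    (fun f => ∀ j, proj f (w j) ∈ R) a fun f => ?_
  choose t ht using fun j => exists_reducedWord (G := G) (proj f (w j), fun l => (w j).2 (c l))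
  have h := hR t fun j x => by
    simp only [ht]
    exact (card_proj_eq_mul_card (exists_sum_zsmul_eq_of_unit (i := j) (hc j)) _ x).le
  simp only [ht] at h
  simpa only [proj_add_sum_single] using h

lemma exists_separating {m : ℕ} {a : ℝ} {R : Finset G} (hm : 1 ≤ m)
    (hR : ∀ t : Fin m → ReducedWord G m, (∀ j, SmallFibers (t j).toWord) →
      a * Fintype.card (Fin m → G) <
        ((Finset.univ.filter fun h : Fin m → G => ∀ j, proj h (t j).toWord ∈ R).card : ℝ))
    (S : Finset (G × (Fin k → ℤ))) (hS : S.card ≤ m)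
    (hlin : ∀ w ∈ S, ∃ i, w.2 i = 1 ∨ w.2 i = -1) (U : Finset G)
    (hU : (m : ℝ) ^ 2 + m * U.card ≤ a * Fintype.card G) :
    ∃ f : Fin k → G, SeparatesSet f S ∧ (∀ w ∈ S, proj f w ∉ U) ∧ ∀ w ∈ S, proj f w ∈ R := by
  rcases S.eq_empty_or_nonempty with rfl | ⟨w₀, hw₀⟩
  · exact ⟨0, by simp [SeparatesSet]⟩
  have : Nonempty (Fin m) := ⟨⟨0, hm⟩⟩
  obtain ⟨e⟩ : Nonempty (S ↪ Fin m) :=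
    Function.Embedding.nonempty_of_card_le (by simpa using hS)
  have : Nonempty S := ⟨⟨w₀, hw₀⟩⟩
  let w : Fin m → G × (Fin k → ℤ) := fun j => (Function.invFun e j : S)
  have hgood := card_forall_proj_mem_gt hR w fun j => hlin _ (Function.invFun e j).2
  have hbad := card_bad_mul_card_le S hS hlin U
  have hn : (0 : ℝ) < Fintype.card G := by exact_mod_cast Fintype.card_pos
  have hlt : (Finset.univ.filter fun f : Fin k → G =>
      ¬ (SeparatesSet f S ∧ ∀ w ∈ S, proj f w ∉ U)).card <
      (Finset.univ.filter fun f : Fin k → G => ∀ j, proj f (w j) ∈ R).card := by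
    have h1 : (((Finset.univ.filter fun f : Fin k → G =>
      ¬ (SeparatesSet f S ∧ ∀ w ∈ S, proj f w ∉ U)).card : ℝ)) * Fintype.card G ≤
      ((m : ℝ) ^ 2 + m * U.card) * Fintype.card (Fin k → G) := by exact_mod_cast hbad
    have h2 := mul_le_mul_of_nonneg_right hU (Nat.cast_nonneg (α := ℝ) (Fintype.card (Fin k → G)))
    have h3 := mul_lt_mul_of_pos_right hgood hn
    have h4 := lt_of_mul_lt_mul_right (a := (Fintype.card G : ℝ))
      ((h1.trans h2).trans_lt (lt_of_eq_of_lt (by ring) h3)) hn.le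
    exact_mod_cast h4
  obtain ⟨f, hf, hf'⟩ := Finset.exists_mem_notMem_of_card_lt_card hlt
  simp only [Finset.mem_filter, Finset.mem_univ, true_and, not_not] at hf hf'
  refine ⟨f, hf'.1, hf'.2, fun v hv => ?_⟩
  have h := hf (e ⟨v, hv⟩)
  simp only [w, Function.leftInverse_invFun e.injective _] at h
  exact h

lemma subsetMean_reducedWord_ge {p : ℝ} {m : ℕ} (hm : 1 ≤ m) (hp0 : 0 ≤ p) (hp1 : p ≤ 1) :
    1 - (Fintype.card G : ℝ) ^ ((m + 1) * m) *
      Real.exp (-(p ^ (2 * m) * Fintype.card G / (16 * m ^ 2))) ≤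
    subsetMean p Finset.univ (fun R : Finset G =>
      if ∀ t : Fin m → ReducedWord G m, (∀ j, SmallFibers (t j).toWord) →
        p ^ m / 2 * Fintype.card (Fin m → G) <
          ((Finset.univ.filter fun h : Fin m → G => ∀ j, proj h (t j).toWord ∈ R).card : ℝ)
      then 1 else 0) := by
  have h := subsetMean_forall_many_ge (p := p)
    (T := {t : Fin m → ReducedWord G m // ∀ j, SmallFibers (t j).toWord})
    (fun t j (h : Fin m → G) => proj h (t.1 j).toWord) hm (fun t j x => t.2 j x) hp0 hp1
  have hcard : (Fintype.card {t : Fin m → ReducedWord G m // ∀ j, SmallFibers (t j).toWord} : ℝ) ≤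
      (Fintype.card G : ℝ) ^ ((m + 1) * m) := by
    exact_mod_cast (Fintype.card_subtype_le _).trans (card_pi_reducedWord G m).le
  refine (sub_le_sub_left (mul_le_mul_of_nonneg_right hcard (Real.exp_pos _).le) 1).trans
    (h.trans (le_of_eq ?_))
  simp only [Subtype.forall]

end Words

lemma exists_forall_pow_mul_exp_le {δ b c : ℝ} (hδ : 0 < δ) (hb : 0 < b) (hc : 0 < c) (d : ℕ) :
    ∃ N : ℕ, ∀ n : ℕ, N ≤ n → (n : ℝ) ^ d * Real.exp (-(b * (n : ℝ) ^ c)) ≤ δ := by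
  have h := (tendsto_rpow_mul_exp_neg_mul_atTop_nhds_zero (d / c) b hb).comp
    ((tendsto_rpow_atTop hc).comp tendsto_natCast_atTop_atTop)
  obtain ⟨N, hN⟩ := Filter.eventually_atTop.1 (h.eventually (ge_mem_nhds hδ))
  refine ⟨N, fun n hn => ?_⟩
  have := hN n hn
  simp only [Function.comp_apply] at this
  rw [← Real.rpow_mul (Nat.cast_nonneg n), mul_div_cancel₀ _ hc.ne', Real.rpow_natCast,
    neg_mul] at this
  exact this

/-- Gadget finding in random sets: with high probability, for every small family of
words linear in at least one variable and every small forbidden set `U`, there is a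
separating projection avoiding `U` whose image lies in the random set. -/
theorem gadget_finding :
    ∀ δ : ℝ, 0 < δ → ∃ N : ℕ,
      ∀ (G : Type) [AddCommGroup G] [Fintype G] [DecidableEq G], ∀ p : ℝ,
      N ≤ Fintype.card G →
      (Fintype.card G : ℝ) ^ (-(1 : ℝ) / 700) ≤ p → p ≤ 1 →
      1 - δ ≤ ∑ R : Finset G,
        (if (∀ k : ℕ, 1 ≤ k →
              ∀ S : Finset (G × (Fin k → ℤ)), S.card ≤ 100 →
              (∀ w ∈ S, ∃ i, w.2 i = 1 ∨ w.2 i = -1) →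
              ∀ U : Finset G,
              ((U.card : ℝ) ≤ p ^ 100 * Fintype.card G / 1000) →
              ∃ f : Fin k → G, SeparatesSet f S ∧
                (∀ w ∈ S, proj f w ∉ U) ∧ (∀ w ∈ S, proj f w ∈ R))
        then setProb G p R else 0) := by
  intro δ hδ
  obtain ⟨N₁, hN₁⟩ := exists_forall_pow_mul_exp_le (b := 1 / (16 * 100 ^ 2)) (c := 5 / 7) hδ
    (by norm_num) (by norm_num) ((100 + 1) * 100)
  obtain ⟨N₂, hN₂⟩ := Filter.eventually_atTop.1
    (((tendsto_rpow_atTop (show (0 : ℝ) < 6 / 7 by norm_num)).comp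
      tendsto_natCast_atTop_atTop).eventually_ge_atTop 25000)
  refine ⟨max N₁ N₂, ?_⟩
  intro G _ _ _ p hN hnp hp1
  have hn : (0 : ℝ) < Fintype.card G := by exact_mod_cast Fintype.card_pos
  have hp0 : 0 ≤ p := (Real.rpow_nonneg hn.le _).trans hnp
  have hpow : ∀ e : ℕ, (Fintype.card G : ℝ) ^ (1 - (e : ℝ) / 700) ≤ p ^ e * Fintype.card G := by
    intro e
    have h := pow_le_pow_left₀ (Real.rpow_nonneg hn.le _) hnp e
    rw [← Real.rpow_natCast, ← Real.rpow_mul hn.le] at h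
    refine le_trans (le_of_eq ?_) (mul_le_mul_of_nonneg_right h hn.le)
    rw [← Real.rpow_add_one hn.ne']
    congr 1
    ring
  have h1 := hN₁ _ ((le_max_left _ _).trans hN)
  have h2 := hN₂ _ ((le_max_right _ _).trans hN)
  have h100 := hpow 100
  have h200 := hpow (2 * 100)
  rw [show (1 : ℝ) - (100 : ℕ) / 700 = 6 / 7 by norm_num] at h100
  rw [show (1 : ℝ) - ((2 * 100 : ℕ) : ℝ) / 700 = 5 / 7 by norm_num] at h200
  have hlow : (25000 : ℝ) ≤ p ^ 100 * Fintype.card G := le_trans h2 h100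
  have hmean := subsetMean_reducedWord_ge (G := G) (m := 100) (by norm_num) hp0 hp1
  have hexp : (Fintype.card G : ℝ) ^ ((100 + 1) * 100) *
      Real.exp (-(p ^ (2 * 100) * Fintype.card G / (16 * (100 : ℕ) ^ 2))) ≤ δ := by
    refine le_trans (mul_le_mul_of_nonneg_left (Real.exp_le_exp.2 ?_) (pow_nonneg hn.le _)) h1
    rw [Nat.cast_ofNat, neg_le_neg_iff, div_mul_eq_mul_div, one_mul]
    exact div_le_div_of_nonneg_right h200 (by norm_num)
  refine (sub_le_sub_left hexp 1).trans (hmean.trans ?_)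
  rw [subsetMean, Finset.powerset_univ]
  refine Finset.sum_le_sum fun R _ => ?_
  have hw : 0 ≤ setProb G p R :=
    mul_nonneg (pow_nonneg hp0 _) (pow_nonneg (sub_nonneg.2 hp1) _)
  rw [Finset.card_univ]
  change setProb G p R * _ ≤ _
  split_ifs with hR hE hE
  · rw [mul_one]
  · refine absurd ?_ hE
    intro k _ S hS hlin U hU
    refine exists_separating (m := 100) (by norm_num) hR S hS hlin U ?_
    rw [Nat.cast_ofNat]
    linarith
  · simpa using hw
  · simp
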